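/- arXiv:2007.08829 — 3 statements merged into one kernel-verified Lean document; each statement's English description precedes it below -/
import Mathlib

section
/- For every risk profile g ∈ G and every X ∈ L^1, the g-adjusted Expected Shortfall, defined as ES^g(X) = inf{m ∈ ℝ : ES_p(X − m) ≤ g(p) for all p ∈ [0,1]}, satisfies ES^g(X) = sup_{p∈[0,1]} {ES_p(X) − g(p)}, where the convention ∞ − ∞ = −∞ is used. -/
open MeasureTheory Set Filter

variable {Ω : Type*} [MeasurableSpace Ω]

/-- An atomless probability space: every set of positive measure has a subset of
strictly smaller positive measure. -/
def Atomless (μ : Measure Ω) : Prop :=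
  ∀ A : Set Ω, MeasurableSet A → 0 < μ A →
    ∃ B : Set Ω, MeasurableSet B ∧ B ⊆ A ∧ 0 < μ B ∧ μ B < μ A

/-- Value at Risk at level `p`: the left `p`-quantile for `p ∈ (0,1]`, the essential
infimum for `p = 0`.  Values are extended reals. -/
noncomputable def VaR (μ : Measure Ω) (X : Ω → ℝ) (p : ℝ) : EReal :=
  if p = 0 then essInf (fun ω => (X ω : EReal)) μ
  else sInf ((fun x : ℝ => (x : EReal)) '' {x : ℝ | ENNReal.ofReal p ≤ μ {ω | X ω ≤ x}})

/-- Real-valued version of the left `p`-quantile, used as the integrand of ES. -/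
noncomputable def VaRr (μ : Measure Ω) (X : Ω → ℝ) (p : ℝ) : ℝ :=
  sInf {x : ℝ | ENNReal.ofReal p ≤ μ {ω | X ω ≤ x}}

/-- Expected Shortfall at level `p`: `(1/(1-p)) ∫_p^1 VaR_q(X) dq` for `p ∈ [0,1)`,
the essential supremum for `p = 1`. -/
noncomputable def ES (μ : Measure Ω) (X : Ω → ℝ) (p : ℝ) : EReal :=
  if p = 1 then essSup (fun ω => (X ω : EReal)) μ
  else (((1 - p)⁻¹ * ∫ q in Set.Ioo p 1, VaRr μ X q : ℝ) : EReal)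

/-- The `g`-adjusted Expected Shortfall, `sup_{p ∈ [0,1]} (ES_p(X) - g(p))`.
Note that in `EReal` one has `⊤ - ⊤ = ⊥`, matching the convention `∞ - ∞ = -∞`. -/
noncomputable def adjES (μ : Measure Ω) (g : ℝ → EReal) (X : Ω → ℝ) : EReal :=
  ⨆ p ∈ Set.Icc (0:ℝ) 1, (ES μ X p - g p)

/-- The class `𝒢` of risk profiles: increasing functions `[0,1] → (-∞,∞]` that are
not identically `∞`. -/
def IsRiskProfile (g : ℝ → EReal) : Prop :=
  MonotoneOn g (Set.Icc (0:ℝ) 1) ∧ (∀ p ∈ Set.Icc (0:ℝ) 1, g p ≠ ⊥) ∧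
    ∃ p ∈ Set.Icc (0:ℝ) 1, g p ≠ ⊤

/-- Second-order stochastic dominance: `SSD μ X Y` means `X ≥_SSD Y`, i.e. every
risk-averse agent prefers `X` to `Y` (positive values are losses). -/
def SSD (μ : Measure Ω) (X Y : Ω → ℝ) : Prop :=
  ∀ u : ℝ → ℝ, Monotone u → ConcaveOn ℝ Set.univ u →
    ∫ ω, u (-(Y ω)) ∂μ ≤ ∫ ω, u (-(X ω)) ∂μ

/-- The inf-convolution of the functionals `ρ_1, …, ρ_n`. -/
noncomputable def infConv (μ : Measure Ω) {n : ℕ} (ρ : Fin n → ((Ω → ℝ) → EReal))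
    (X : Ω → ℝ) : EReal :=
  ⨅ (Y : Fin n → Ω → ℝ) (_ : (∀ i, Integrable (Y i) μ) ∧ ∀ ω, (∑ i, Y i ω) = X ω),
    ∑ i, ρ i (Y i)

/-- The class `𝒢_VaR`: risk profiles finite on `[0,1)`, left-continuous on `[0,1]`
and right-continuous at `0`. -/
def GVaRProfile (g : ℝ → EReal) : Prop :=
  IsRiskProfile g ∧ (∀ p ∈ Set.Ico (0:ℝ) 1, g p ≠ ⊤) ∧
    (∀ p ∈ Set.Ioc (0:ℝ) 1, Filter.Tendsto g (nhdsWithin p (Set.Ico 0 p)) (nhds (g p))) ∧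
    Filter.Tendsto g (nhdsWithin 0 (Set.Ioc 0 1)) (nhds (g 0))

/-- The class `𝒢_ES`: profiles in `𝒢_VaR` such that `h_g(p) = (1-p)g(p)` is concave
on `(0,1)` and left-continuous at `1` (with `h_g(1) = 0` by the convention `0·∞ = 0`). -/
def GESProfile (g : ℝ → EReal) : Prop :=
  GVaRProfile g ∧ ConcaveOn ℝ (Set.Ioo (0:ℝ) 1) (fun p => (1 - p) * (g p).toReal) ∧
    Filter.Tendsto (fun p => (1 - p) * (g p).toReal) (nhdsWithin 1 (Set.Ico (0:ℝ) 1)) (nhds 0)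

lemma aux_mem_iff (μ : Measure Ω) [IsProbabilityMeasure μ] (X : Ω → ℝ) (hX : AEMeasurable X μ)
    (q x : ℝ) : ENNReal.ofReal q ≤ μ {ω | X ω ≤ x} ↔ q ≤ ProbabilityTheory.cdf (μ.map X) x := by
  haveI := Measure.isProbabilityMeasure_map hX
  have h1 : μ {ω | X ω ≤ x} = (μ.map X) (Iic x) := by
    rw [Measure.map_apply_of_aemeasurable hX measurableSet_Iic]; rfl
  rw [h1, ← ProbabilityTheory.ofReal_cdf (μ.map X) x,
    ENNReal.ofReal_le_ofReal_iff (ProbabilityTheory.cdf_nonneg _ _)]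

lemma aux_galois (μ : Measure Ω) [IsProbabilityMeasure μ] (X : Ω → ℝ) (hX : AEMeasurable X μ)
    {q : ℝ} (hq : q ∈ Ioo (0:ℝ) 1) (x : ℝ) :
    VaRr μ X q ≤ x ↔ q ≤ ProbabilityTheory.cdf (μ.map X) x := by
  haveI := Measure.isProbabilityMeasure_map hX
  unfold VaRr
  simp only [aux_mem_iff μ X hX]
  set F := ProbabilityTheory.cdf (μ.map X)
  have hne : {x : ℝ | q ≤ F x}.Nonempty := by
    have := (ProbabilityTheory.tendsto_cdf_atTop (μ.map X)).eventually (eventually_ge_nhds hq.2)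
    exact this.exists
  have hbdd : BddBelow {x : ℝ | q ≤ F x} := by
    obtain ⟨a, ha⟩ := ((ProbabilityTheory.tendsto_cdf_atBot (μ.map X)).eventually
      (eventually_lt_nhds hq.1)).exists
    refine ⟨a, fun y hy => ?_⟩
    by_contra! hlt
    exact absurd (lt_of_le_of_lt (F.mono hlt.le) ha) (not_lt.2 hy)
  constructor
  · intro h
    have hev : ∀ y ∈ Ioi x, q ≤ F y := by
      intro y hy
      obtain ⟨z, hz, hzy⟩ := exists_lt_of_csInf_lt hne (lt_of_le_of_lt h hy)
      exact le_trans hz (F.mono hzy.le)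
    have hc : Tendsto F (nhdsWithin x (Ioi x)) (nhds (F x)) :=
      (F.right_continuous x).tendsto.mono_left (nhdsWithin_mono _ Ioi_subset_Ici_self)
    exact ge_of_tendsto hc (eventually_nhdsWithin_of_forall hev)
  · intro h
    exact csInf_le hbdd h

lemma aux_shift (μ : Measure Ω) [IsProbabilityMeasure μ] (X : Ω → ℝ) (hX : AEMeasurable X μ)
    {q : ℝ} (hq : q ∈ Ioo (0:ℝ) 1) (m : ℝ) :
    VaRr μ (fun ω => X ω - m) q = VaRr μ X q - m := by
  refine eq_of_forall_ge_iff fun x => ?_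
  rw [aux_galois μ _ (hX.sub_const m) hq, ← aux_mem_iff μ _ (hX.sub_const m), sub_le_iff_le_add,
    aux_galois μ _ hX hq, ← aux_mem_iff μ _ hX]
  simp only [sub_le_iff_le_add]

lemma aux_int (μ : Measure Ω) [IsProbabilityMeasure μ] (X : Ω → ℝ) (hX : Integrable X μ) :
    IntegrableOn (VaRr μ X) (Ioo (0:ℝ) 1) := by
  have hXm := hX.aemeasurable
  haveI := Measure.isProbabilityMeasure_map hXm
  have hmono : MonotoneOn (VaRr μ X) (Ioo (0:ℝ) 1) := by
    intro a ha b hb hab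
    rw [aux_galois μ X hXm ha]
    exact hab.trans ((aux_galois μ X hXm hb _).1 le_rfl)
  have hme : AEMeasurable (VaRr μ X) (volume.restrict (Ioo (0:ℝ) 1)) :=
    aemeasurable_restrict_of_monotoneOn measurableSet_Ioo hmono
  haveI : IsProbabilityMeasure (volume.restrict (Ioo (0:ℝ) 1)) := ⟨by simp⟩
  haveI := Measure.isProbabilityMeasure_map hme
  have hmap : (volume.restrict (Ioo (0:ℝ) 1)).map (VaRr μ X) = μ.map X := by
    refine Measure.ext_of_Iic _ _ fun x => ?_
    rw [Measure.map_apply_of_aemeasurable hme measurableSet_Iic,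
      Measure.restrict_apply' measurableSet_Ioo,
      ← ProbabilityTheory.ofReal_cdf (μ.map X) x]
    set c := ProbabilityTheory.cdf (μ.map X) x with hc
    have hs : VaRr μ X ⁻¹' Iic x ∩ Ioo (0:ℝ) 1 = Iic c ∩ Ioo (0:ℝ) 1 := by
      ext q
      simp only [mem_inter_iff, mem_preimage, mem_Iic]
      exact and_congr_left fun hq => aux_galois μ X hXm hq x
    have hc1 : c ≤ 1 := ProbabilityTheory.cdf_le_one _ _
    rw [hs]
    apply le_antisymm
    · calc volume (Iic c ∩ Ioo (0:ℝ) 1) ≤ volume (Icc 0 c) :=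
            measure_mono fun q hq => ⟨hq.2.1.le, hq.1⟩
        _ = _ := by simp
    · calc ENNReal.ofReal c = volume (Ioo 0 c) := by simp
        _ ≤ volume (Iic c ∩ Ioo (0:ℝ) 1) := measure_mono fun q hq => ⟨hq.2.le, hq.1, hq.2.trans_le hc1⟩
  have h1 : Integrable id (μ.map X) :=
    (integrable_map_measure aestronglyMeasurable_id hXm).2 hX
  rw [← hmap] at h1
  exact (integrable_map_measure aestronglyMeasurable_id hme).1 h1

lemma aux_ereal (a b : EReal) (hb : b ≠ ⊥) (m : ℝ) : a ≤ b + m ↔ a - b ≤ m := by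
  rw [EReal.sub_le_iff_le_add (Or.inl hb) (Or.inr (EReal.coe_ne_bot m)), add_comm]

lemma aux_ES (μ : Measure Ω) [IsProbabilityMeasure μ] (X : Ω → ℝ) (hX : Integrable X μ)
    (m p : ℝ) (hp : p ∈ Icc (0:ℝ) 1) (b : EReal) (hb : b ≠ ⊥) :
    ES μ (fun ω => X ω - m) p ≤ b ↔ ES μ X p - b ≤ m := by
  rw [← aux_ereal _ _ hb]
  unfold ES
  split_ifs with h
  · have key : ∀ (Y : Ω → EReal) (c : EReal), essSup Y μ ≤ c ↔ ∀ᵐ ω ∂μ, Y ω ≤ c := by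
      intro Y c
      refine ⟨fun hc => ?_, fun hc => essSup_le_of_ae_le c hc⟩
      filter_upwards [ae_le_essSup (f := Y) (μ := μ)] with ω hω using hω.trans hc
    rw [key, key]
    refine eventually_congr (Eventually.of_forall fun ω => ?_)
    rw [EReal.coe_sub, EReal.sub_le_iff_le_add (Or.inl (EReal.coe_ne_bot m))
      (Or.inl (EReal.coe_ne_top m))]
  · have hp1 : p < 1 := lt_of_le_of_ne hp.2 h
    have hsub : Ioo p 1 ⊆ Ioo (0:ℝ) 1 := Ioo_subset_Ioo_left hp.1
    have hI : ∫ q in Ioo p 1, VaRr μ (fun ω => X ω - m) q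
        = (∫ q in Ioo p 1, VaRr μ X q) - (1 - p) * m := by
      rw [setIntegral_congr_fun measurableSet_Ioo
        (fun q hq => aux_shift μ X hX.aemeasurable (hsub hq) m),
        integral_sub ((aux_int μ X hX).mono_set hsub) (by simp)]
      simp [hp1.le]
    have h2 : (1 - p) ≠ 0 := by linarith
    rw [hI, mul_sub, inv_mul_cancel_left₀ h2, EReal.coe_sub,
      EReal.sub_le_iff_le_add (Or.inl (EReal.coe_ne_bot m)) (Or.inl (EReal.coe_ne_top m))]

/-- For every risk profile `g ∈ 𝒢` and every `X ∈ L¹`, the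
`g`-adjusted Expected Shortfall defined as
`inf {m ∈ ℝ : ES_p(X - m) ≤ g(p) for all p ∈ [0,1]}` coincides with
`sup_{p ∈ [0,1]} (ES_p(X) - g(p))` (with the convention `∞ - ∞ = -∞`). -/
theorem stmt0 (μ : Measure Ω) [IsProbabilityMeasure μ] (hatomless : Atomless μ)
    (g : ℝ → EReal) (hg : IsRiskProfile g) (X : Ω → ℝ) (hX : Integrable X μ) :
    sInf ((fun m : ℝ => (m : EReal)) ''
        {m : ℝ | ∀ p ∈ Set.Icc (0:ℝ) 1, ES μ (fun ω => X ω - m) p ≤ g p})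
      = adjES μ g X := by
  have hset : {m : ℝ | ∀ p ∈ Set.Icc (0:ℝ) 1, ES μ (fun ω => X ω - m) p ≤ g p}
      = {m : ℝ | adjES μ g X ≤ m} := by
    ext m
    simp only [mem_setOf_eq, adjES, iSup_le_iff]
    exact forall₂_congr fun p hp => aux_ES μ X hX m p hp (g p) (hg.2.1 p hp)
  rw [hset]
  apply le_antisymm
  · refine EReal.le_of_forall_lt_iff_le.1 fun z hz => ?_
    exact sInf_le ⟨z, hz.le, rfl⟩
  · refine le_sInf ?_
    rintro _ ⟨m, hm, rfl⟩
    exact hm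
end

section
/- For every risk profile g ∈ G the following statements are equivalent: (a) ES^g is positively homogeneous, i.e., ES^g(λX) = λES^g(X) for all X ∈ L^1 and λ ∈ (0,∞); (b) g(0) = 0 and g(p) ∈ (0,∞) for at most one p ∈ (0,1]; (c) ES^g = ES_p where p = sup{q ∈ [0,1] : g(q) = 0}. -/
open MeasureTheory Set Filter

variable {Ω : Type*} [MeasurableSpace Ω]

open ProbabilityTheory Topology

lemma cdf_map_eq (μ : Measure Ω) [IsProbabilityMeasure μ] {X : Ω → ℝ} (hX : AEMeasurable X μ)
    (x : ℝ) : μ {ω | X ω ≤ x} = ENNReal.ofReal (cdf (μ.map X) x) := by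
  have := Measure.isProbabilityMeasure_map hX
  rw [ofReal_cdf, Measure.map_apply_of_aemeasurable hX measurableSet_Iic]
  rfl

lemma VaRr_eq (μ : Measure Ω) [IsProbabilityMeasure μ] {X : Ω → ℝ} (hX : AEMeasurable X μ)
    (u : ℝ) : VaRr μ X u = sInf {x : ℝ | u ≤ cdf (μ.map X) x} := by
  unfold VaRr
  congr 1
  ext x
  simp only [Set.mem_ofPred_eq]
  rw [cdf_map_eq μ hX, ENNReal.ofReal_le_ofReal_iff (cdf_nonneg _ _)]

lemma VaRr_le_iff (μ : Measure Ω) [IsProbabilityMeasure μ] {X : Ω → ℝ} (hX : AEMeasurable X μ)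
    {u : ℝ} (h0 : 0 < u) (h1 : u < 1) (x : ℝ) :
    VaRr μ X u ≤ x ↔ u ≤ cdf (μ.map X) x := by
  have := Measure.isProbabilityMeasure_map hX
  rw [VaRr_eq μ hX]
  set F := cdf (μ.map X) with hF
  set S := {x : ℝ | u ≤ F x} with hS
  have hne : S.Nonempty := by
    obtain ⟨y, hy⟩ := ((tendsto_cdf_atTop (μ.map X)).eventually (eventually_gt_nhds h1)).exists
    exact ⟨y, hy.le⟩
  have hbdd : BddBelow S := by
    obtain ⟨y, hy⟩ := ((tendsto_cdf_atBot (μ.map X)).eventually (eventually_lt_nhds h0)).exists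
    refine ⟨y, fun z hz => ?_⟩
    by_contra hlt
    have h3 := F.mono (le_of_not_ge hlt)
    have h4 : u ≤ F z := hz
    have h5 : F y < u := hy
    linarith
  constructor
  · intro h
    have hc := F.right_continuous x
    have hc' : Tendsto F (𝓝[>] x) (𝓝 (F x)) := hc.mono_left (nhdsWithin_mono _ Ioi_subset_Ici_self)
    refine ge_of_tendsto hc' ?_
    filter_upwards [self_mem_nhdsWithin] with y hy
    obtain ⟨z, hz, hzy⟩ := exists_lt_of_csInf_lt hne (lt_of_le_of_lt h hy)
    exact le_trans hz (F.mono hzy.le)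
  · intro h
    exact csInf_le hbdd h

lemma VaRr_mono (μ : Measure Ω) [IsProbabilityMeasure μ] {X : Ω → ℝ} (hX : AEMeasurable X μ) :
    MonotoneOn (VaRr μ X) (Ioo 0 1) := by
  intro u hu v hv huv
  rw [VaRr_le_iff μ hX hu.1 hu.2]
  exact huv.trans ((VaRr_le_iff μ hX hv.1 hv.2 _).1 le_rfl)

lemma VaRr_integrable (μ : Measure Ω) [IsProbabilityMeasure μ] {X : Ω → ℝ} (hX : Integrable X μ) :
    IntegrableOn (VaRr μ X) (Ioo 0 1) := by
  have hXm := hX.aemeasurable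
  have := Measure.isProbabilityMeasure_map hXm
  have hV : AEMeasurable (VaRr μ X) (volume.restrict (Ioo 0 1)) :=
    aemeasurable_restrict_of_monotoneOn measurableSet_Ioo (VaRr_mono μ hXm)
  have hmap : μ.map X = (volume.restrict (Ioo (0:ℝ) 1)).map (VaRr μ X) := by
    refine Measure.ext_of_Iic _ _ fun x => ?_
    rw [Measure.map_apply_of_aemeasurable hV measurableSet_Iic, ← ofReal_cdf,
      Measure.restrict_apply' measurableSet_Ioo]
    have h1 := cdf_le_one (μ.map X) x
    have h0 := cdf_nonneg (μ.map X) x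
    set c := cdf (μ.map X) x with hc
    apply le_antisymm
    · calc ENNReal.ofReal c = volume (Ioo 0 c) := by simp
        _ ≤ _ := by
          refine measure_mono fun u hu => ?_
          have : u ∈ Ioo (0:ℝ) 1 := ⟨hu.1, hu.2.trans_le h1⟩
          exact ⟨(VaRr_le_iff μ hXm this.1 this.2 x).2 hu.2.le, this⟩
    · calc _ ≤ volume (Ioc 0 c) := by
            refine measure_mono fun u hu => ?_
            exact ⟨hu.2.1, (VaRr_le_iff μ hXm hu.2.1 hu.2.2 x).1 hu.1⟩
        _ = _ := by simp
  have h1 : Integrable (id : ℝ → ℝ) (μ.map X) :=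
    (integrable_map_measure aestronglyMeasurable_id hXm).2 hX
  rw [hmap] at h1
  exact (integrable_map_measure aestronglyMeasurable_id hV).1 h1

lemma VaRr_smul (μ : Measure Ω) (X : Ω → ℝ) {l : ℝ} (hl : 0 < l) (u : ℝ) :
    VaRr μ (fun ω => l * X ω) u = l * VaRr μ X u := by
  unfold VaRr
  rw [← smul_eq_mul, ← Real.sInf_smul_of_nonneg hl.le]
  congr 1
  ext x
  rw [Set.mem_smul_set_iff_inv_smul_mem₀ hl.ne']
  simp only [Set.mem_ofPred_eq, smul_eq_mul]
  have : ∀ ω, (l * X ω ≤ x ↔ X ω ≤ l⁻¹ * x) := fun ω => by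
    rw [le_inv_mul_iff₀ hl]
  simp only [this]

noncomputable def mulIso (l : ℝ) (hl : 0 < l) : EReal ≃o EReal where
  toFun x := (l : EReal) * x
  invFun x := ((l⁻¹ : ℝ) : EReal) * x
  left_inv x := by
    show ((l⁻¹ : ℝ) : EReal) * ((l : EReal) * x) = x
    rw [← mul_assoc, ← EReal.coe_mul, inv_mul_cancel₀ hl.ne', EReal.coe_one, one_mul]
  right_inv x := by
    show (l : EReal) * (((l⁻¹ : ℝ) : EReal) * x) = x
    rw [← mul_assoc, ← EReal.coe_mul, mul_inv_cancel₀ hl.ne', EReal.coe_one, one_mul]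
  map_rel_iff' := by
    intro a b
    show (l : EReal) * a ≤ (l : EReal) * b ↔ a ≤ b
    constructor
    · intro h
      have h' : ((l⁻¹ : ℝ) : EReal) * ((l : EReal) * a) ≤ ((l⁻¹ : ℝ) : EReal) * ((l : EReal) * b) :=
        mul_le_mul_of_nonneg_left h (by exact_mod_cast (inv_pos.2 hl).le)
      rwa [← mul_assoc, ← mul_assoc, ← EReal.coe_mul, inv_mul_cancel₀ hl.ne', EReal.coe_one, one_mul,
        one_mul] at h'
    · intro h
      exact mul_le_mul_of_nonneg_left h (by exact_mod_cast hl.le)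

lemma ES_smul (μ : Measure Ω) (X : Ω → ℝ) {l : ℝ} (hl : 0 < l) (p : ℝ) :
    ES μ (fun ω => l * X ω) p = (l : EReal) * ES μ X p := by
  unfold ES
  split_ifs with h
  · have := (mulIso l hl).essSup_apply (fun ω => (X ω : EReal)) μ
    simp only [EReal.coe_mul]
    exact this.symm
  · rw [← EReal.coe_mul]
    congr 1
    simp only [VaRr_smul μ X hl]
    rw [integral_const_mul]
    ring

lemma essSup_ne_bot (μ : Measure Ω) [IsProbabilityMeasure μ] (X : Ω → ℝ) :
    essSup (fun ω => (X ω : EReal)) μ ≠ ⊥ := by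
  intro h
  have h1 : ∀ᵐ ω ∂μ, (X ω : EReal) ≤ essSup (fun ω => (X ω : EReal)) μ := ae_le_essSup
  obtain ⟨ω, hω⟩ := h1.exists
  rw [h] at hω
  exact absurd (le_bot_iff.1 hω) (EReal.coe_ne_bot _)

lemma VaRr_le_of_ae (μ : Measure Ω) [IsProbabilityMeasure μ] {X : Ω → ℝ} (hX : AEMeasurable X μ)
    {M : ℝ} (hM : ∀ᵐ ω ∂μ, X ω ≤ M) {u : ℝ} (hu : u ∈ Ioo (0:ℝ) 1) : VaRr μ X u ≤ M := by
  rw [VaRr_le_iff μ hX hu.1 hu.2]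
  have h1 : μ {ω | X ω ≤ M} = 1 := prob_compl_eq_zero_iff₀ (hX.nullMeasurableSet_preimage measurableSet_Iic) |>.1 hM
  rw [cdf_map_eq μ hX, ENNReal.ofReal_eq_one] at h1
  rw [h1]; exact hu.2.le

lemma ES_le_of_VaRr_le (μ : Measure Ω) [IsProbabilityMeasure μ] {X : Ω → ℝ} (hX : Integrable X μ)
    {p M : ℝ} (h0 : 0 ≤ p) (h1 : p < 1) (h : ∀ u ∈ Ioo p 1, VaRr μ X u ≤ M) :
    (1 - p)⁻¹ * ∫ q in Set.Ioo p 1, VaRr μ X q ≤ M := by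
  rw [inv_mul_le_iff₀ (by linarith)]
  have := setIntegral_mono_on (μ := volume) (s := Ioo p 1) (f := VaRr μ X) (g := fun _ => M)
    ((VaRr_integrable μ hX).mono_set (Ioo_subset_Ioo_left h0)) (by simp)
    measurableSet_Ioo h
  simpa [h1.le] using this

lemma le_ES_of_le_VaRr (μ : Measure Ω) [IsProbabilityMeasure μ] {X : Ω → ℝ} (hX : Integrable X μ)
    {p M : ℝ} (h0 : 0 ≤ p) (h1 : p < 1) (h : ∀ u ∈ Ioo p 1, M ≤ VaRr μ X u) :
    M ≤ (1 - p)⁻¹ * ∫ q in Set.Ioo p 1, VaRr μ X q := by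
  rw [le_inv_mul_iff₀ (by linarith)]
  have := setIntegral_mono_on (μ := volume) (s := Ioo p 1) (g := VaRr μ X) (f := fun _ => M)
    (by simp) ((VaRr_integrable μ hX).mono_set (Ioo_subset_Ioo_left h0))
    measurableSet_Ioo h
  simpa [h1.le] using this

lemma ES_mono (μ : Measure Ω) [IsProbabilityMeasure μ] {X : Ω → ℝ} (hX : Integrable X μ)
    {p q : ℝ} (h0 : 0 ≤ p) (hpq : p ≤ q) (h1 : q ≤ 1) : ES μ X p ≤ ES μ X q := by
  have hXm := hX.aemeasurable
  rcases hpq.eq_or_lt with rfl | hlt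
  · exact le_rfl
  rcases h1.eq_or_lt with rfl | hq1
  · unfold ES
    rw [if_neg hlt.ne, if_pos rfl]
    have hae : ∀ᵐ ω ∂μ, (X ω : EReal) ≤ essSup (fun ω => (X ω : EReal)) μ := ae_le_essSup
    have hb := essSup_ne_bot μ X
    generalize essSup (fun ω => (X ω : EReal)) μ = e at hae hb
    induction e with
    | bot => exact absurd rfl hb
    | top => exact le_top
    | coe M =>
      rw [EReal.coe_le_coe_iff]
      apply ES_le_of_VaRr_le μ hX h0 hlt
      intro u hu
      exact VaRr_le_of_ae μ hXm (by simpa using hae) ⟨h0.trans_lt hu.1, hu.2⟩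
  · unfold ES
    rw [if_neg (hlt.trans hq1).ne, if_neg hq1.ne, EReal.coe_le_coe_iff]
    have hi := VaRr_integrable μ hX
    have hq0 : q ∈ Ioo (0:ℝ) 1 := ⟨h0.trans_lt hlt, hq1⟩
    have hsub : Ioc p q ⊆ Ioo 0 1 := fun u hu => ⟨h0.trans_lt hu.1, hu.2.trans_lt hq1⟩
    have hsplit : ∫ u in Ioo p 1, VaRr μ X u = (∫ u in Ioc p q, VaRr μ X u) + ∫ u in Ioo q 1, VaRr μ X u := by
      rw [← setIntegral_union _ measurableSet_Ioo (hi.mono_set hsub)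
        (hi.mono_set (Ioo_subset_Ioo_left hq0.1.le)), Ioc_union_Ioo_eq_Ioo hlt.le hq1]
      exact Set.disjoint_left.2 fun u hu hu' => absurd hu.2 (not_le.2 hu'.1)
    have hA : ∫ u in Ioc p q, VaRr μ X u ≤ (q - p) * VaRr μ X q := by
      have := setIntegral_mono_on (μ := volume) (s := Ioc p q) (f := VaRr μ X)
        (g := fun _ => VaRr μ X q) (hi.mono_set hsub) (by simp) measurableSet_Ioc
        (fun u hu => VaRr_mono μ hXm (hsub hu) hq0 hu.2)
      simpa [hlt.le] using this
    have hB := le_ES_of_le_VaRr μ hX (M := VaRr μ X q) hq0.1.le hq1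
      (fun u hu => VaRr_mono μ hXm hq0 ⟨hq0.1.trans hu.1, hu.2⟩ hu.1.le)
    set B := (1 - q)⁻¹ * ∫ u in Ioo q 1, VaRr μ X u with hBdef
    have hB' : ∫ u in Ioo q 1, VaRr μ X u = (1 - q) * B := by
      rw [hBdef, mul_inv_cancel_left₀ (by linarith)]
    rw [inv_mul_le_iff₀ (by linarith), hsplit, hB']
    nlinarith [mul_le_mul_of_nonneg_left hB (sub_nonneg.2 hlt.le)]

lemma ES_left (μ : Measure Ω) [IsProbabilityMeasure μ] {X : Ω → ℝ} (hX : Integrable X μ)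
    {p : ℝ} (h0 : 0 < p) (h1 : p ≤ 1) {c : EReal} (hc : ∀ r, 0 ≤ r → r < p → ES μ X r ≤ c) :
    ES μ X p ≤ c := by
  have hXm := hX.aemeasurable
  have hi := VaRr_integrable μ hX
  rcases h1.eq_or_lt with rfl | hp1
  · have hV : ∀ u ∈ Ioo (0:ℝ) 1, (VaRr μ X u : EReal) ≤ c := by
      intro u hu
      refine le_trans ?_ (hc u hu.1.le hu.2)
      unfold ES
      rw [if_neg hu.2.ne, EReal.coe_le_coe_iff]
      exact le_ES_of_le_VaRr μ hX hu.1.le hu.2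
        (fun v hv => VaRr_mono μ hXm hu ⟨hu.1.trans hv.1, hv.2⟩ hv.1.le)
    unfold ES
    rw [if_pos rfl]
    clear hc
    induction c with
    | bot => exact absurd (le_bot_iff.1 (hV (1/2) (by norm_num))) (EReal.coe_ne_bot _)
    | top => exact le_top
    | coe M =>
      refine essSup_le_of_ae_le _ ?_
      have hF : cdf (μ.map X) M = 1 := by
        apply le_antisymm (cdf_le_one _ _)
        apply le_of_forall_lt
        intro c hc
        obtain ⟨u, hu1, hu2⟩ := exists_between (max_lt hc zero_lt_one)
        have hu : u ∈ Ioo (0:ℝ) 1 := ⟨(le_max_right _ _).trans_lt hu1, hu2⟩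
        have := (VaRr_le_iff μ hXm hu.1 hu.2 M).1 (by exact_mod_cast hV u hu)
        exact ((le_max_left _ _).trans_lt hu1).trans_le this
      have hm : μ {ω | X ω ≤ M} = 1 := by rw [cdf_map_eq μ hXm, hF, ENNReal.ofReal_one]
      have hae : ∀ᵐ ω ∂μ, X ω ≤ M :=
        (prob_compl_eq_zero_iff₀ (hXm.nullMeasurableSet_preimage measurableSet_Iic)).2 hm
      filter_upwards [hae] with ω hω
      exact_mod_cast hω
  · have hcont : ContinuousOn (fun x => ∫ t in x..1, VaRr μ X t) (uIcc 0 1) := by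
      apply intervalIntegral.continuousOn_primitive_interval_left
      rw [uIcc_of_le zero_le_one, integrableOn_Icc_iff_integrableOn_Ioo]
      exact hi
    rw [uIcc_of_le zero_le_one] at hcont
    have hat : ContinuousAt (fun x => (1 - x)⁻¹ * ∫ t in x..1, VaRr μ X t) p := by
      refine ContinuousAt.mul ?_ (hcont.continuousAt (Icc_mem_nhds h0 hp1))
      exact ContinuousAt.inv₀ (by fun_prop) (by linarith)
    have heq : ∀ r, r < 1 → ES μ X r = (((1 - r)⁻¹ * ∫ t in r..1, VaRr μ X t : ℝ) : EReal) := by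
      intro r hr
      unfold ES
      rw [if_neg hr.ne, intervalIntegral.integral_of_le hr.le, integral_Ioc_eq_integral_Ioo]
    rw [heq p hp1]
    have ht : Tendsto (fun x => (((1 - x)⁻¹ * ∫ t in x..1, VaRr μ X t : ℝ) : EReal)) (𝓝[<] p)
        (𝓝 (((1 - p)⁻¹ * ∫ t in p..1, VaRr μ X t : ℝ) : EReal)) :=
      (continuous_coe_real_ereal.tendsto _).comp (hat.tendsto.mono_left nhdsWithin_le_nhds)
    refine le_of_tendsto ht ?_
    filter_upwards [Ioo_mem_nhdsLT h0] with r hr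
    rw [← heq r (hr.2.trans hp1)]
    exact hc r hr.1.le hr.2

lemma exists_small (μ : Measure Ω) [IsProbabilityMeasure μ] (hat : Atomless μ) {ε : ℝ} (hε : 0 < ε) :
    ∃ A : Set Ω, MeasurableSet A ∧ 0 < μ.real A ∧ μ.real A < ε := by
  have key : ∀ n : ℕ, ∃ A : Set Ω, MeasurableSet A ∧ 0 < μ.real A ∧ μ.real A ≤ (1/2)^n := by
    intro n
    induction n with
    | zero => exact ⟨univ, MeasurableSet.univ, by simp, by simp⟩
    | succ n ih =>
      obtain ⟨A, hA, hpos, hle⟩ := ih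
      obtain ⟨B, hB, hBA, hB0, hBlt⟩ := hat A hA (by
        rw [measureReal_def] at hpos
        exact (ENNReal.toReal_pos_iff.1 hpos).1)
      have hB0' : 0 < μ.real B := ENNReal.toReal_pos hB0.ne' (measure_ne_top _ _)
      have hBlt' : μ.real B < μ.real A := (ENNReal.toReal_lt_toReal (measure_ne_top _ _) (measure_ne_top _ _)).2 hBlt
      have hd : μ.real (A \ B) = μ.real A - μ.real B := measureReal_sdiff hBA hB
      rw [pow_succ]
      by_cases hc : μ.real B ≤ μ.real A / 2
      · exact ⟨B, hB, hB0', by linarith⟩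
      · exact ⟨A \ B, hA.diff hB, by linarith, by linarith⟩
  obtain ⟨n, hn⟩ := exists_pow_lt_of_lt_one hε (by norm_num : (1/2:ℝ) < 1)
  obtain ⟨A, h1, h2, h3⟩ := key n
  exact ⟨A, h1, h2, h3.trans_lt hn⟩

lemma ind_props (μ : Measure Ω) [IsProbabilityMeasure μ] {A : Set Ω} (hA : MeasurableSet A) :
    Integrable (A.indicator (fun _ => (1:ℝ))) μ ∧
    (0 < μ.real A → ES μ (A.indicator (fun _ => (1:ℝ))) 1 = 1) ∧
    ∀ p, 0 ≤ p → p < 1 → μ.real A < 1 - p →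
      ES μ (A.indicator (fun _ => (1:ℝ))) p = (((1 - p)⁻¹ * μ.real A : ℝ) : EReal) := by
  have hX : Integrable (A.indicator (fun _ => (1:ℝ))) μ := (integrable_const 1).indicator hA
  have hXm := hX.aemeasurable
  have hle1 : ∀ ω, A.indicator (fun _ => (1:ℝ)) ω ≤ 1 := fun ω => by
    by_cases h : ω ∈ A <;> simp [h]
  have h0le : ∀ ω, 0 ≤ A.indicator (fun _ => (1:ℝ)) ω := fun ω => by
    by_cases h : ω ∈ A <;> simp [h]
  have hF : ∀ x, cdf (μ.map (A.indicator (fun _ => (1:ℝ)))) x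
      = μ.real {ω | A.indicator (fun _ => (1:ℝ)) ω ≤ x} := fun x => by
    rw [measureReal_def, cdf_map_eq μ hXm, ENNReal.toReal_ofReal (cdf_nonneg _ _)]
  have hAc : μ.real Aᶜ = 1 - μ.real A := by
    rw [measureReal_compl hA]; simp
  refine ⟨hX, ?_, ?_⟩
  · intro hpos
    unfold ES
    rw [if_pos rfl]
    apply le_antisymm
    · refine essSup_le_of_ae_le _ (Eventually.of_forall fun ω => ?_)
      have := EReal.coe_le_coe_iff.2 (hle1 ω)
      simpa using this
    · by_contra hlt
      rw [not_le] at hlt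
      have hae : ∀ᵐ ω ∂μ, ((A.indicator (fun _ => (1:ℝ)) ω : ℝ) : EReal)
        ≤ essSup (fun ω => ((A.indicator (fun _ => (1:ℝ)) ω : ℝ) : EReal)) μ := ae_le_essSup
      have hnA : ∀ᵐ ω ∂μ, ω ∉ A := by
        filter_upwards [hae] with ω hω hωA
        have := hω.trans_lt hlt
        simp [hωA] at this
      have : μ A = 0 := by
        rw [ae_iff] at hnA
        simpa using hnA
      simp [measureReal_def, this] at hpos
  · intro p hp0 hp1 hap
    unfold ES
    rw [if_neg hp1.ne]
    congr 2
    have hV : ∀ u ∈ Ioo p 1, VaRr μ (A.indicator (fun _ => (1:ℝ))) u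
        = (Ioi (1 - μ.real A)).indicator (fun _ => (1:ℝ)) u := by
      intro u hu
      have hu0 : u ∈ Ioo (0:ℝ) 1 := ⟨hp0.trans_lt hu.1, hu.2⟩
      have hself := (VaRr_le_iff μ hXm hu0.1 hu0.2 _).1 le_rfl
      rw [hF] at hself
      by_cases hc : 1 - μ.real A < u
      · rw [indicator_of_mem (by exact hc)]
        apply le_antisymm
        · exact VaRr_le_of_ae μ hXm (Eventually.of_forall hle1) hu0
        · by_contra hlt
          rw [not_le] at hlt
          have : μ.real {ω | A.indicator (fun _ => (1:ℝ)) ω ≤ VaRr μ (A.indicator (fun _ => (1:ℝ))) u}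
              ≤ μ.real Aᶜ := by
            refine measureReal_mono ?_
            intro ω hω hωA
            have hω' : A.indicator (fun _ => (1:ℝ)) ω ≤ VaRr μ (A.indicator (fun _ => (1:ℝ))) u := hω
            rw [indicator_of_mem hωA] at hω'
            linarith
          linarith
      · rw [indicator_of_notMem (by exact hc)]
        apply le_antisymm
        · rw [VaRr_le_iff μ hXm hu0.1 hu0.2, hF]
          have : μ.real Aᶜ ≤ μ.real {ω | A.indicator (fun _ => (1:ℝ)) ω ≤ 0} := by
            refine measureReal_mono ?_
            intro ω hω
            show A.indicator (fun _ => (1:ℝ)) ω ≤ 0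
            rw [indicator_of_notMem hω]
          linarith
        · by_contra hlt
          rw [not_le] at hlt
          have : {ω | A.indicator (fun _ => (1:ℝ)) ω ≤ VaRr μ (A.indicator (fun _ => (1:ℝ))) u} = ∅ := by
            apply eq_empty_of_forall_notMem
            intro ω hω
            have hω' : A.indicator (fun _ => (1:ℝ)) ω ≤ VaRr μ (A.indicator (fun _ => (1:ℝ))) u := hω
            linarith [h0le ω]
          rw [this, measureReal_empty] at hself
          linarith [hu0.1]
    rw [setIntegral_congr_fun measurableSet_Ioo hV, setIntegral_indicator measurableSet_Ioi]
    have : Ioo p 1 ∩ Ioi (1 - μ.real A) = Ioo (1 - μ.real A) 1 := by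
      ext u
      simp only [mem_inter_iff, mem_Ioo, mem_Ioi]
      constructor
      · rintro ⟨⟨_, h⟩, h'⟩; exact ⟨h', h⟩
      · rintro ⟨h', h⟩; exact ⟨⟨by linarith, h⟩, h'⟩
    rw [this]
    simp

lemma ES_zero (μ : Measure Ω) [IsProbabilityMeasure μ] (p : ℝ) : ES μ (fun _ => (0:ℝ)) p = 0 := by
  have h := ES_smul μ (fun _ => (0:ℝ)) (l := 2) two_pos p
  simp only [mul_zero] at h
  unfold ES at h ⊢
  split_ifs with hp
  · simp
  · rw [if_neg hp, ← EReal.coe_mul, EReal.coe_eq_coe_iff] at h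
    norm_cast
    linarith

lemma a_imp_b (μ : Measure Ω) [IsProbabilityMeasure μ] (hat : Atomless μ)
    (g : ℝ → EReal) (hg : IsRiskProfile g)
    (ha : ∀ X : Ω → ℝ, Integrable X μ → ∀ l : ℝ, 0 < l →
        adjES μ g (fun ω => l * X ω) = (l : EReal) * adjES μ g X) :
    g 0 = 0 ∧ ∀ p ∈ Set.Ioc (0:ℝ) 1, ∀ q ∈ Set.Ioc (0:ℝ) 1,
            (0 < g p ∧ g p ≠ ⊤) → (0 < g q ∧ g q ≠ ⊤) → p = q := by
  obtain ⟨hmono, hbot, p₀, hp₀, hp₀t⟩ := hg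
  have h0mem : (0:ℝ) ∈ Icc (0:ℝ) 1 := by simp
  have hle0 : ∀ r ∈ Icc (0:ℝ) 1, g 0 ≤ g r := fun r hr => hmono h0mem hr hr.1
  have hg0 : g 0 = 0 := by
    have hz : adjES μ g (fun _ => 0) = - g 0 := by
      unfold adjES
      simp only [ES_zero, zero_sub]
      apply le_antisymm
      · exact iSup₂_le fun r hr => EReal.neg_le_neg_iff.2 (hle0 r hr)
      · exact le_iSup₂_of_le 0 h0mem le_rfl
    have h := ha (fun _ => 0) (integrable_zero _ _ _) 2 two_pos
    simp only [mul_zero] at h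
    rw [hz] at h
    have hb := hbot 0 h0mem
    have ht : g 0 ≠ ⊤ := fun h => hp₀t (top_le_iff.1 (h ▸ hle0 p₀ hp₀))
    lift g 0 to ℝ using ⟨ht, hb⟩ with γ
    norm_cast at h ⊢
    linarith
  have hnn : ∀ r ∈ Icc (0:ℝ) 1, 0 ≤ g r := fun r hr => hg0 ▸ hle0 r hr
  refine ⟨hg0, ?_⟩
  have key : ∀ p ∈ Set.Ioc (0:ℝ) 1, ∀ q ∈ Set.Ioc (0:ℝ) 1,
            (0 < g p ∧ g p ≠ ⊤) → (0 < g q ∧ g q ≠ ⊤) → ¬ p < q := by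
    intro p hp q hq hgp hgq hpq
    have hp1 : p < 1 := hpq.trans_le hq.2
    have hpI : p ∈ Icc (0:ℝ) 1 := ⟨hp.1.le, hp.2⟩
    have hqI : q ∈ Icc (0:ℝ) 1 := ⟨hq.1.le, hq.2⟩
    obtain ⟨A, hA, ha0, ha1⟩ := exists_small μ hat (ε := if q = 1 then 1 - p else 1 - q) (by
      split_ifs with h
      · linarith
      · have := lt_of_le_of_ne hq.2 h; linarith)
    obtain ⟨hX, hE1, hE⟩ := ind_props μ hA
    have hE1 := hE1 ha0
    have hap : μ.real A < 1 - p := by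
      split_ifs at ha1 <;> linarith
    have hEp := hE p hp.1.le hp1 hap
    obtain ⟨eq, heq, hlt⟩ : ∃ e : ℝ, ES μ (A.indicator (fun _ => (1:ℝ))) q = e ∧
        (1 - p)⁻¹ * μ.real A < e := by
      by_cases h : q = 1
      · refine ⟨1, by rw [h, hE1]; rfl, ?_⟩
        rw [inv_mul_lt_iff₀ (by linarith)]; linarith
      · rw [if_neg h] at ha1
        have hq1 := lt_of_le_of_ne hq.2 h
        refine ⟨_, hE q hq.1.le hq1 ha1, ?_⟩
        apply mul_lt_mul_of_pos_right _ ha0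
        exact (inv_lt_inv₀ (by linarith) (by linarith)).2 (by linarith)
    have hep0 : 0 ≤ (1 - p)⁻¹ * μ.real A := mul_nonneg (inv_nonneg.2 (by linarith)) ha0.le
    set ep := (1 - p)⁻¹ * μ.real A with hepd
    set X := A.indicator (fun _ => (1:ℝ)) with hXd
    have hmon := fun {r s : ℝ} (h0 : 0 ≤ r) (h1 : r ≤ s) (h2 : s ≤ 1) => ES_mono μ hX h0 h1 h2
    obtain ⟨γ, hγ⟩ : ∃ γ : ℝ, g p = γ := ⟨(g p).toReal, (EReal.coe_toReal hgp.2 (hbot p hpI)).symm⟩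
    obtain ⟨δ, hδ⟩ : ∃ δ : ℝ, g q = δ := ⟨(g q).toReal, (EReal.coe_toReal hgq.2 (hbot q hqI)).symm⟩
    have hγ0 : 0 < γ := by have := hgp.1; rw [hγ] at this; exact_mod_cast this
    have hδ0 : 0 < δ := by have := hgq.1; rw [hδ] at this; exact_mod_cast this
    have up : adjES μ g (fun ω => γ * X ω) ≤ ((γ * ep : ℝ) : EReal) := by
      refine iSup₂_le fun r hr => ?_
      rw [ES_smul μ X hγ0]
      rcases lt_or_ge r p with hrp | hrp
      · calc (γ : EReal) * ES μ X r - g r ≤ (γ : EReal) * (ep : EReal) - 0 := by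
              apply EReal.sub_le_sub _ (hnn r hr)
              apply mul_le_mul_of_nonneg_left _ (by exact_mod_cast hγ0.le)
              rw [← hEp]; exact hmon hr.1 hrp.le hp1.le
          _ = _ := by rw [sub_zero, ← EReal.coe_mul]
      · calc (γ : EReal) * ES μ X r - g r ≤ (γ : EReal) * (1:EReal) - γ := by
              apply EReal.sub_le_sub _ (by rw [← hγ]; exact hmono hpI hr hrp)
              apply mul_le_mul_of_nonneg_left _ (by exact_mod_cast hγ0.le)
              rw [← hE1]; exact hmon hr.1 hr.2 le_rfl
          _ = ((0:ℝ) : EReal) := by rw [mul_one, ← EReal.coe_sub, sub_self]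
          _ ≤ _ := by
              rw [EReal.coe_le_coe_iff]; positivity
    have low : ∀ l : ℝ, 0 < l → ((l * eq - δ : ℝ) : EReal) ≤ (l : EReal) * adjES μ g X := by
      intro l hl
      rw [← ha X hX l hl]
      refine le_iSup₂_of_le q hqI ?_
      rw [ES_smul μ X hl, heq, hδ, ← EReal.coe_mul, ← EReal.coe_sub]
    rw [ha X hX γ hγ0] at up
    generalize adjES μ g X = z at up low
    induction z with
    | bot =>
      have := low 1 one_pos
      simp at this
      exact EReal.coe_ne_bot (eq - δ) (by exact_mod_cast this)
    | top =>
      rw [EReal.coe_mul_top_of_pos hγ0] at up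
      exact EReal.coe_ne_top _ (top_le_iff.1 up)
    | coe z =>
      have hz : z ≤ ep := by
        have : γ * z ≤ γ * ep := by exact_mod_cast up
        exact le_of_mul_le_mul_left this hγ0
      have h2 := low (2 * δ / (eq - ep)) (by apply div_pos <;> linarith)
      have h3 : 2 * δ / (eq - ep) * eq - δ ≤ 2 * δ / (eq - ep) * z := by exact_mod_cast h2
      have h4 : 2 * δ / (eq - ep) * z ≤ 2 * δ / (eq - ep) * ep :=
        mul_le_mul_of_nonneg_left hz (by apply div_nonneg <;> linarith)
      have h5 : 2 * δ / (eq - ep) * (eq - ep) = 2 * δ := div_mul_cancel₀ _ (by linarith)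
      nlinarith
  intro p hp q hq h1 h2
  exact le_antisymm (not_lt.1 (key q hq p hp h2 h1)) (not_lt.1 (key p hp q hq h1 h2))

lemma b_imp_c (μ : Measure Ω) [IsProbabilityMeasure μ]
    (g : ℝ → EReal) (hg : IsRiskProfile g)
    (hb : g 0 = 0 ∧ ∀ p ∈ Set.Ioc (0:ℝ) 1, ∀ q ∈ Set.Ioc (0:ℝ) 1,
            (0 < g p ∧ g p ≠ ⊤) → (0 < g q ∧ g q ≠ ⊤) → p = q) (X : Ω → ℝ) (hX : Integrable X μ) :
    adjES μ g X = ES μ X (sSup {q ∈ Set.Icc (0:ℝ) 1 | g q = 0}) := by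
  obtain ⟨hmono, hbot, -⟩ := hg
  obtain ⟨hg0, huniq⟩ := hb
  have h0mem : (0:ℝ) ∈ Icc (0:ℝ) 1 := by simp
  have hnn : ∀ r ∈ Icc (0:ℝ) 1, 0 ≤ g r := fun r hr => hg0 ▸ hmono h0mem hr hr.1
  set S := {q ∈ Set.Icc (0:ℝ) 1 | g q = 0} with hS
  have h0S : (0:ℝ) ∈ S := ⟨h0mem, hg0⟩
  have hbd : BddAbove S := ⟨1, fun q hq => hq.1.2⟩
  have hs0 : 0 ≤ sSup S := le_csSup hbd h0S
  have hs1 : sSup S ≤ 1 := csSup_le ⟨0, h0S⟩ fun q hq => hq.1.2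
  have hlow : ∀ r ∈ Icc (0:ℝ) 1, g r = 0 → ES μ X r ≤ adjES μ g X := by
    intro r hr h
    refine le_iSup₂_of_le r hr ?_
    rw [h, sub_zero]
  apply le_antisymm
  · refine iSup₂_le fun r hr => ?_
    rcases le_or_gt r (sSup S) with h | h
    · calc ES μ X r - g r ≤ ES μ X r - 0 := EReal.sub_le_sub le_rfl (hnn r hr)
        _ = ES μ X r := sub_zero _
        _ ≤ _ := ES_mono μ hX hr.1 h hs1
    · have hpos : ∀ t ∈ Icc (0:ℝ) 1, sSup S < t → 0 < g t := by
        intro t ht hst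
        refine lt_of_le_of_ne (hnn t ht) fun h' => ?_
        exact absurd (le_csSup hbd (show t ∈ S from ⟨ht, h'.symm⟩)) (not_le.2 hst)
      have htop : g r = ⊤ := by
        by_contra hne
        obtain ⟨t, ht1, ht2⟩ := exists_between h
        have htI : t ∈ Icc (0:ℝ) 1 := ⟨hs0.trans ht1.le, ht2.le.trans hr.2⟩
        have := huniq t ⟨hs0.trans_lt ht1, htI.2⟩ r ⟨hs0.trans_lt h, hr.2⟩
          ⟨hpos t htI ht1, fun hh => hne (top_le_iff.1 (hh ▸ hmono htI hr ht2.le))⟩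
          ⟨hpos r hr h, hne⟩
        exact ht2.ne this
      rw [htop, EReal.sub_top]
      exact bot_le
  · rcases hs0.eq_or_lt with h | h
    · rw [← h]; exact hlow 0 h0mem hg0
    · refine ES_left μ hX h hs1 fun r hr0 hr => ?_
      obtain ⟨t, ht, hrt⟩ := exists_lt_of_lt_csSup ⟨0, h0S⟩ hr
      have hrI : r ∈ Icc (0:ℝ) 1 := ⟨hr0, hrt.le.trans ht.1.2⟩
      refine hlow r hrI (le_antisymm ?_ (hnn r hrI))
      rw [← ht.2]; exact hmono hrI ht.1 hrt.le

/-- For every risk profile `g ∈ 𝒢`, the following are equivalent: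
(a) `ES^g` is positively homogeneous; (b) `g(0) = 0` and `g(p) ∈ (0,∞)` for at most
one `p ∈ (0,1]`; (c) `ES^g = ES_p` where `p = sup {q ∈ [0,1] : g(q) = 0}`. -/
theorem stmt5 (μ : Measure Ω) [IsProbabilityMeasure μ] (hatomless : Atomless μ)
    (g : ℝ → EReal) (hg : IsRiskProfile g) :
    ((∀ X : Ω → ℝ, Integrable X μ → ∀ l : ℝ, 0 < l →
        adjES μ g (fun ω => l * X ω) = (l : EReal) * adjES μ g X)
      ↔ (g 0 = 0 ∧ ∀ p ∈ Set.Ioc (0:ℝ) 1, ∀ q ∈ Set.Ioc (0:ℝ) 1,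
            (0 < g p ∧ g p ≠ ⊤) → (0 < g q ∧ g q ≠ ⊤) → p = q)) ∧
    ((g 0 = 0 ∧ ∀ p ∈ Set.Ioc (0:ℝ) 1, ∀ q ∈ Set.Ioc (0:ℝ) 1,
            (0 < g p ∧ g p ≠ ⊤) → (0 < g q ∧ g q ≠ ⊤) → p = q)
      ↔ (∀ X : Ω → ℝ, Integrable X μ →
            adjES μ g X = ES μ X (sSup {q ∈ Set.Icc (0:ℝ) 1 | g q = 0}))) := by
  have hba := a_imp_b μ hatomless g hg
  have hbc := b_imp_c μ g hg
  have hca : (∀ X : Ω → ℝ, Integrable X μ →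
            adjES μ g X = ES μ X (sSup {q ∈ Set.Icc (0:ℝ) 1 | g q = 0})) →
      (∀ X : Ω → ℝ, Integrable X μ → ∀ l : ℝ, 0 < l →
        adjES μ g (fun ω => l * X ω) = (l : EReal) * adjES μ g X) := by
    intro h X hX l hl
    rw [h _ (hX.const_mul l), h X hX, ES_smul μ X hl]
  exact ⟨⟨hba, fun h => hca (hbc h)⟩, ⟨hbc, fun h => hba (hca h)⟩⟩
end

section
/- Let g ∈ G. Then g belongs to G_VaR (i.e., g is finite on [0,1), left-continuous on [0,1], and right-continuous at 0) if and only if there exists a random variable Z, bounded from below, such that g(p) = VaR_p(Z) for every p ∈ [0,1]. -/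
open MeasureTheory Set Filter

variable {Ω : Type*} [MeasurableSpace Ω]

theorem aux_chain (μ : Measure Ω) [IsProbabilityMeasure μ] (hat : Atomless μ) :
    ∃ C : Set (Set Ω), (∀ A ∈ C, MeasurableSet A) ∧
      (∀ A ∈ C, ∀ B ∈ C, μ A < μ B → A ⊆ B) ∧
      ∀ t : ENNReal, t ≤ 1 → ∃ A ∈ C, μ A = t := by
  let r : {A : Set Ω // MeasurableSet A} → {A : Set Ω // MeasurableSet A} → Prop :=
    fun A B => A.1 ⊆ B.1 ∧ μ A.1 < μ B.1
  let C₀ := maxChain r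
  have hC₀ : IsMaxChain r C₀ := maxChain_spec
  let C : Set (Set Ω) := {A | ∃ h : MeasurableSet A, (⟨A, h⟩ : {A : Set Ω // MeasurableSet A}) ∈ C₀}
  have hm : ∀ A ∈ C, MeasurableSet A := fun A h => h.1
  have hch : ∀ A ∈ C, ∀ B ∈ C, A ≠ B → (A ⊆ B ∧ μ A < μ B) ∨ (B ⊆ A ∧ μ B < μ A) := by
    rintro A ⟨hA, hA'⟩ B ⟨hB, hB'⟩ hne
    exact hC₀.1 hA' hB' (by simpa using hne)
  have hmax : ∀ A, MeasurableSet A →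
      (∀ B ∈ C, A ≠ B → (A ⊆ B ∧ μ A < μ B) ∨ (B ⊆ A ∧ μ B < μ A)) → A ∈ C := by
    intro A hA h
    have h1 : IsChain r (insert ⟨A, hA⟩ C₀) := by
      apply hC₀.1.insert
      rintro ⟨B, hB⟩ hB' hne
      exact h B ⟨hB, hB'⟩ (by simpa using hne)
    have h2 := hC₀.2 h1 (Set.subset_insert _ _)
    exact ⟨hA, by rw [h2]; exact Set.mem_insert _ _⟩
  have hsub : ∀ A ∈ C, ∀ B ∈ C, μ A ≤ μ B → A ⊆ B := by
    intro A hA B hB h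
    by_cases hne : A = B
    · exact hne.subset
    rcases hch A hA B hB hne with h1 | h1
    · exact h1.1
    · exact absurd h1.2 (not_lt.2 h)
  refine ⟨C, hm, fun A hA B hB h => hsub A hA B hB h.le, ?_⟩
  have hex : ∀ A, MeasurableSet A → (∀ B ∈ C, μ B < μ A → B ⊆ A) →
      (∀ B ∈ C, μ A < μ B → A ⊆ B) → ∃ B ∈ C, μ B = μ A := by
    intro A hA h1 h2
    by_contra! hc
    refine hc A (hmax A hA ?_) rfl
    intro B hB _
    rcases lt_or_gt_of_ne (hc B hB) with h | h
    · exact Or.inr ⟨h1 B hB h, h⟩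
    · exact Or.inl ⟨h2 B hB h, h⟩
  obtain ⟨A0, hA0, hA0'⟩ := hex ∅ MeasurableSet.empty (by simp) (by simp)
  obtain ⟨A1, hA1, hA1'⟩ := hex univ MeasurableSet.univ (by simp) (by
    intro B hB h
    exact absurd h (not_lt.2 (measure_mono (subset_univ _))))
  simp only [measure_empty, measure_univ] at hA0' hA1'
  intro t ht
  by_contra! hcon
  -- lower approximation
  have hlow : ∃ B ∈ C, μ B ≤ t ∧ ∀ F ∈ C, μ F ≤ t → μ F ≤ μ B := by
    obtain ⟨u, hu, hlim, humem⟩ := exists_seq_tendsto_sSup (S := μ '' {A | A ∈ C ∧ μ A ≤ t})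
      ⟨0, A0, ⟨hA0, by simp [hA0']⟩, hA0'⟩ (OrderTop.bddAbove _)
    choose A hA hAu using humem
    have hsup : ⨆ n, u n = sSup (μ '' {A | A ∈ C ∧ μ A ≤ t}) :=
      tendsto_nhds_unique (tendsto_atTop_iSup hu) hlim
    have hmono : Monotone A := fun i j hij =>
      hsub _ (hA i).1 _ (hA j).1 (by rw [hAu, hAu]; exact hu hij)
    have hμ : μ (⋃ n, A n) = ⨆ n, u n := by
      rw [hmono.directed_le.measure_iUnion]
      simp [hAu]
    obtain ⟨B, hB, hBμ⟩ := hex (⋃ n, A n) (MeasurableSet.iUnion fun n => hm _ (hA n).1)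
      (by
        intro F hF h
        rw [hμ] at h
        obtain ⟨n, hn⟩ := lt_iSup_iff.1 h
        exact (hsub F hF _ (hA n).1 (by rw [hAu]; exact hn.le)).trans (subset_iUnion A n))
      (by
        intro F hF h
        exact iUnion_subset fun n => hsub _ (hA n).1 F hF
          ((measure_mono (subset_iUnion A n)).trans h.le))
    refine ⟨B, hB, ?_, ?_⟩
    · rw [hBμ, hμ]
      exact iSup_le fun n => by rw [← hAu]; exact (hA n).2
    · intro F hF h
      rw [hBμ, hμ, hsup]
      exact le_sSup ⟨F, ⟨hF, h⟩, rfl⟩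
  have hupp : ∃ B ∈ C, t ≤ μ B ∧ ∀ F ∈ C, t ≤ μ F → μ B ≤ μ F := by
    obtain ⟨u, hu, hlim, humem⟩ := exists_seq_tendsto_sInf (S := μ '' {A | A ∈ C ∧ t ≤ μ A})
      ⟨1, A1, ⟨hA1, by simpa [hA1'] using ht⟩, hA1'⟩ (OrderBot.bddBelow _)
    choose A hA hAu using humem
    have hsup : ⨅ n, u n = sInf (μ '' {A | A ∈ C ∧ t ≤ μ A}) :=
      tendsto_nhds_unique (tendsto_atTop_iInf hu) hlim
    have hmono : Antitone A := fun i j hij =>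
      hsub _ (hA j).1 _ (hA i).1 (by rw [hAu, hAu]; exact hu hij)
    have hμ : μ (⋂ n, A n) = ⨅ n, u n := by
      rw [hmono.directed_ge.measure_iInter (fun n => (hm _ (hA n).1).nullMeasurableSet)
        ⟨0, measure_ne_top _ _⟩]
      simp [hAu]
    obtain ⟨B, hB, hBμ⟩ := hex (⋂ n, A n) (MeasurableSet.iInter fun n => hm _ (hA n).1)
      (by
        intro F hF h
        exact subset_iInter fun n => hsub F hF _ (hA n).1
          (h.le.trans (measure_mono (iInter_subset A n))))
      (by
        intro F hF h
        rw [hμ] at h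
        obtain ⟨n, hn⟩ := iInf_lt_iff.1 h
        exact (iInter_subset A n).trans (hsub _ (hA n).1 F hF (by rw [hAu]; exact hn.le)))
    refine ⟨B, hB, ?_, ?_⟩
    · rw [hBμ, hμ]
      exact le_iInf fun n => by rw [← hAu]; exact (hA n).2
    · intro F hF h
      rw [hBμ, hμ, hsup]
      exact sInf_le ⟨F, ⟨hF, h⟩, rfl⟩
  obtain ⟨B, hB, hBt, hBmax⟩ := hlow
  obtain ⟨D, hD, hDt, hDmin⟩ := hupp
  have hBlt : μ B < t := lt_of_le_of_ne hBt (hcon B hB)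
  have hDlt : t < μ D := lt_of_le_of_ne hDt (hcon D hD).symm
  have hBD := hsub B hB D hD (hBlt.trans hDlt).le
  have hdiff : μ B + μ (D \ B) = μ D := by
    have := measure_sdiff_add_inter (μ := μ) D (hm B hB)
    rw [inter_eq_right.2 hBD] at this
    rw [add_comm]; exact this
  obtain ⟨E, hE, hED, hE0, hElt⟩ := hat (D \ B) ((hm D hD).diff (hm B hB)) (by
    rw [pos_iff_ne_zero]
    intro h0
    rw [h0, add_zero] at hdiff
    exact absurd hdiff (hBlt.trans hDlt).ne)
  have hH : μ (B ∪ E) = μ B + μ E :=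
    measure_union (disjoint_left.2 fun x hx hxE => (hED hxE).2 hx) hE
  have h1 : μ B < μ (B ∪ E) := by
    rw [hH]; exact ENNReal.lt_add_right (measure_ne_top _ _) hE0.ne'
  have h2 : μ (B ∪ E) < μ D := by
    rw [hH, ← hdiff]; exact ENNReal.add_lt_add_left (measure_ne_top _ _) hElt
  obtain ⟨H, hHC, hHμ⟩ := hex (B ∪ E) ((hm B hB).union hE)
    (by
      intro F hF h
      rcases le_total (μ F) t with h3 | h3
      · exact (hsub F hF B hB (hBmax F hF h3)).trans subset_union_left
      · exact absurd ((hDmin F hF h3).trans_lt h) (not_lt.2 h2.le))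
    (by
      intro F hF h
      rcases le_total (μ F) t with h3 | h3
      · exact absurd (h.trans_le (hBmax F hF h3)) (not_lt.2 h1.le)
      · exact (union_subset hBD (hED.trans sdiff_subset)).trans
          (hsub D hD F hF (hDmin F hF h3)))
  rcases le_total (μ H) t with h3 | h3
  · exact absurd (hBmax H hHC h3) (by rw [hHμ]; exact not_le.2 h1)
  · exact absurd (hDmin H hHC h3) (by rw [hHμ]; exact not_le.2 h2)

theorem aux_unif (μ : Measure Ω) [IsProbabilityMeasure μ] (hat : Atomless μ) :
    ∃ V : Ω → Ico (0:ℝ) 1, Measurable V ∧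
      ∀ t ∈ Icc (0:ℝ) 1, μ {ω | (V ω : ℝ) < t} = ENNReal.ofReal t := by
  obtain ⟨C, hm, hsub, hex⟩ := aux_chain μ hat
  have hex' : ∀ t : ℝ, ∃ A ∈ C, t ∈ Icc (0:ℝ) 1 → μ A = ENNReal.ofReal t := by
    intro t
    by_cases ht : t ∈ Icc (0:ℝ) 1
    · obtain ⟨A, hA, h⟩ := hex (ENNReal.ofReal t) (by simpa using ht.2)
      exact ⟨A, hA, fun _ => h⟩
    · obtain ⟨A, hA, h⟩ := hex 0 (by simp)
      exact ⟨A, hA, fun h => absurd h ht⟩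
  choose A hA hAμ using hex'
  have hAs : ∀ s ∈ Icc (0:ℝ) 1, ∀ t ∈ Icc (0:ℝ) 1, s < t → A s ⊆ A t := by
    intro s hs t ht hst
    apply hsub _ (hA s) _ (hA t)
    rw [hAμ s hs, hAμ t ht]
    exact (ENNReal.ofReal_lt_ofReal_iff (hs.1.trans_lt hst)).2 hst
  let S : Ω → Set ℝ := fun ω => insert 1 {q | q ∈ Icc (0:ℝ) 1 ∧ ω ∈ A q}
  let U : Ω → ℝ := fun ω => sInf (S ω)
  have hSne : ∀ ω, (S ω).Nonempty := fun ω => ⟨1, mem_insert _ _⟩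
  have hSlb : ∀ ω, ∀ q ∈ S ω, 0 ≤ q := by
    rintro ω q (rfl | hq)
    · exact zero_le_one
    · exact hq.1.1
  have hU0 : ∀ ω, 0 ≤ U ω := fun ω => le_csInf (hSne ω) (hSlb ω)
  have hUlt : ∀ ω, ∀ t ≤ 1, U ω < t ↔ ∃ q ∈ Ico (0:ℝ) t, ω ∈ A q := by
    intro ω t ht
    constructor
    · intro h
      obtain ⟨q, hq, hqt⟩ := exists_lt_of_csInf_lt (hSne ω) h
      rcases hq with rfl | hq
      · exact absurd hqt (not_lt.2 ht)
      · exact ⟨q, ⟨hq.1.1, hqt⟩, hq.2⟩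
    · rintro ⟨q, hq, hω⟩
      exact (csInf_le ⟨0, hSlb ω⟩ (Or.inr ⟨⟨hq.1, hq.2.le.trans ht⟩, hω⟩)).trans_lt hq.2
  have hUset : ∀ t ≤ 1, {ω | U ω < t} = ⋃ q : ℚ, ⋃ _ : (q:ℝ) ∈ Ico (0:ℝ) t, A q := by
    intro t ht
    ext ω
    simp only [mem_ofPred_eq, mem_iUnion, exists_prop]
    rw [hUlt ω t ht]
    constructor
    · rintro ⟨q, hq, hω⟩
      obtain ⟨q', h1, h2⟩ := exists_rat_btwn hq.2
      have h0 : (0:ℝ) ≤ q' := hq.1.trans h1.le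
      exact ⟨q', ⟨h0, h2⟩, hAs q ⟨hq.1, hq.2.le.trans ht⟩ q' ⟨h0, h2.le.trans ht⟩ h1 hω⟩
    · rintro ⟨q, hq, hω⟩
      exact ⟨q, hq, hω⟩
  have hUmeas : Measurable U := by
    apply measurable_of_Iio
    intro t
    rcases le_or_gt t 1 with ht | ht
    · change MeasurableSet {ω | U ω < t}
      rw [hUset t ht]
      exact MeasurableSet.iUnion fun q => MeasurableSet.iUnion fun _ => hm _ (hA _)
    · have : U ⁻¹' Iio t = univ := by
        ext ω
        simp only [mem_preimage, mem_Iio, mem_univ, iff_true]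
        exact (csInf_le ⟨0, hSlb ω⟩ (mem_insert _ _)).trans_lt ht
      rw [this]
      exact MeasurableSet.univ
  have hUμ : ∀ t ∈ Icc (0:ℝ) 1, μ {ω | U ω < t} = ENNReal.ofReal t := by
    intro t ht
    apply le_antisymm
    · rw [← hAμ t ht]
      apply measure_mono
      intro ω hω
      obtain ⟨q, hq, h⟩ := (hUlt ω t ht.2).1 hω
      exact hAs q ⟨hq.1, hq.2.le.trans ht.2⟩ t ht hq.2 h
    · apply le_of_forall_lt
      intro c hc
      have hc' : c ≠ ⊤ := ne_top_of_lt hc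
      have hct : c.toReal < t := (ENNReal.lt_ofReal_iff_toReal_lt hc').1 hc
      obtain ⟨q, h1, h2⟩ := exists_between hct
      have hq0 : 0 ≤ q := ENNReal.toReal_nonneg.trans h1.le
      have h3 : c < ENNReal.ofReal q := (ENNReal.lt_ofReal_iff_toReal_lt hc').2 h1
      rw [← hAμ q ⟨hq0, h2.le.trans ht.2⟩] at h3
      refine h3.trans_le (measure_mono fun ω hω => ?_)
      exact (hUlt ω t ht.2).2 ⟨q, ⟨hq0, h2⟩, hω⟩
  classical
  let W : Ω → ℝ := fun ω => if U ω < 1 then U ω else 0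
  have hW : ∀ ω, W ω ∈ Ico (0:ℝ) 1 := by
    intro ω
    by_cases h : U ω < 1
    · simp only [W, h, if_true]; exact ⟨hU0 ω, h⟩
    · simp [W, h]
  have hWmeas : Measurable W :=
    Measurable.ite (measurableSet_lt hUmeas measurable_const) hUmeas measurable_const
  refine ⟨fun ω => ⟨W ω, hW ω⟩, hWmeas.subtype_mk, ?_⟩
  intro t ht
  rw [← hUμ t ht]
  apply measure_congr
  have h1 : ∀ᵐ ω ∂μ, U ω < 1 := by
    have := hUμ 1 ⟨zero_le_one, le_rfl⟩
    rw [ENNReal.ofReal_one] at this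
    exact (prob_compl_eq_zero_iff (measurableSet_lt hUmeas measurable_const)).2 this
  filter_upwards [h1] with ω hω
  have : W ω = U ω := by simp [W, hω]
  change (W ω < t) = (U ω < t)
  rw [this]

/-- A risk profile `g ∈ 𝒢` belongs to `𝒢_VaR` (finite on `[0,1)`,
left-continuous on `[0,1]`, right-continuous at `0`) iff there is a random variable
`Z` bounded from below such that `g(p) = VaR_p(Z)` for every `p ∈ [0,1]`. -/
theorem stmt13 (μ : Measure Ω) [IsProbabilityMeasure μ] (hatomless : Atomless μ)
    (g : ℝ → EReal) (hg : IsRiskProfile g) :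
    GVaRProfile g
      ↔ ∃ Z : Ω → ℝ, Measurable Z ∧ (∃ c : ℝ, ∀ ω, c ≤ Z ω) ∧
          ∀ p ∈ Set.Icc (0:ℝ) 1, VaR μ Z p = g p := by
  constructor
  · rintro ⟨⟨hmono, hbot, -⟩, hfin, hleft, hright⟩
    obtain ⟨V, hV, hVμ⟩ := aux_unif μ hatomless
    let h : Ico (0:ℝ) 1 → ℝ := fun t => (g t).toReal
    have hcoe : ∀ t : Ico (0:ℝ) 1, ((h t : ℝ) : EReal) = g t := fun t =>
      EReal.coe_toReal (hfin t t.2) (hbot t ⟨t.2.1, t.2.2.le⟩)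
    have hh : Monotone h := by
      intro s t hst
      rw [← EReal.coe_le_coe_iff, hcoe, hcoe]
      exact hmono ⟨s.2.1, s.2.2.le⟩ ⟨t.2.1, t.2.2.le⟩ hst
    have hge : ∀ x : ℝ, ∀ p ∈ Ioc (0:ℝ) 1, (∀ q ∈ Ico (0:ℝ) p, g q ≤ x) →
        ENNReal.ofReal p ≤ μ {ω | h (V ω) ≤ x} := by
      intro x p hp hx
      rw [← hVμ p ⟨hp.1.le, hp.2⟩]
      refine measure_mono fun ω hω => ?_
      change h (V ω) ≤ x
      rw [← EReal.coe_le_coe_iff, hcoe]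
      exact hx _ ⟨(V ω).2.1, hω⟩
    refine ⟨fun ω => h (V ω), hh.measurable.comp hV, ⟨h ⟨0, by simp⟩, fun ω => hh (V ω).2.1⟩, ?_⟩
    intro p hp
    unfold VaR
    split_ifs with hp0
    · subst hp0
      apply le_antisymm
      · have : (nhdsWithin (0:ℝ) (Ioc 0 1)).NeBot := by
          rw [nhdsWithin_Ioc_eq_nhdsGT zero_lt_one]; infer_instance
        refine ge_of_tendsto hright ?_
        filter_upwards [self_mem_nhdsWithin] with q hq
        by_contra! hlt
        obtain ⟨x, hqx, hx⟩ := EReal.lt_iff_exists_real_btwn.1 hlt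
        have h1 := ae_lt_of_lt_essInf hx
        have h2 : μ {ω | h (V ω) ≤ x} = 0 := by
          rw [measure_eq_zero_iff_ae_notMem]
          filter_upwards [h1] with ω hω
          exact not_le.2 (EReal.coe_lt_coe_iff.1 hω)
        have h3 := hge x q hq (fun s hs => (hmono ⟨hs.1, hs.2.le.trans hq.2⟩
          ⟨hq.1.le, hq.2⟩ hs.2.le).trans hqx.le)
        rw [h2] at h3
        exact absurd h3 (not_le.2 (ENNReal.ofReal_pos.2 hq.1))
      · refine le_essInf_of_ae_le _ ?_
        refine Eventually.of_forall fun ω => ?_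
        change g 0 ≤ ((h (V ω) : ℝ) : EReal)
        rw [hcoe]
        exact hmono ⟨le_rfl, zero_le_one⟩ ⟨(V ω).2.1, (V ω).2.2.le⟩ (V ω).2.1
    · have hp' : p ∈ Ioc (0:ℝ) 1 := ⟨lt_of_le_of_ne hp.1 (Ne.symm hp0), hp.2⟩
      apply le_antisymm
      · by_cases htop : g p = ⊤
        · rw [htop]; exact le_top
        · have hc : (((g p).toReal : ℝ) : EReal) = g p := EReal.coe_toReal htop (hbot p hp)
          rw [← hc]
          apply sInf_le
          refine ⟨_, ?_, rfl⟩
          apply hge _ p hp'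
          intro q hq
          rw [hc]
          exact hmono ⟨hq.1, hq.2.le.trans hp.2⟩ hp hq.2.le
      · apply le_sInf
        rintro _ ⟨x, hx, rfl⟩
        have hx : ENNReal.ofReal p ≤ μ {ω | h (V ω) ≤ x} := hx
        have : (nhdsWithin p (Ico 0 p)).NeBot := by
          rw [nhdsWithin_Ico_eq_nhdsLT hp'.1]; infer_instance
        refine le_of_tendsto (hleft p hp') ?_
        filter_upwards [self_mem_nhdsWithin] with q hq
        by_contra! hlt
        have hle : μ {ω | h (V ω) ≤ x} ≤ ENNReal.ofReal q := by
          rw [← hVμ q ⟨hq.1, hq.2.le.trans hp.2⟩]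
          refine measure_mono fun ω hω => ?_
          change (V ω : ℝ) < q
          by_contra! hc
          have h1 : h (V ω) ≤ x := hω
          rw [← EReal.coe_le_coe_iff, hcoe] at h1
          exact absurd (hlt.trans_le (hmono ⟨hq.1, hq.2.le.trans hp.2⟩
            ⟨(V ω).2.1, (V ω).2.2.le⟩ hc)) (not_lt.2 h1)
        exact absurd ((ENNReal.ofReal_lt_ofReal_iff hp'.1).2 hq.2) (not_lt.2 (hx.trans hle))
  · rintro ⟨Z, hZ, -, hgZ⟩
    obtain ⟨hmono, hbot, -⟩ := id hg
    have hle : ∀ p ∈ Ioc (0:ℝ) 1, ∀ x : ℝ, ENNReal.ofReal p ≤ μ {ω | Z ω ≤ x} → g p ≤ x := by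
      intro p hp x hx
      rw [← hgZ p ⟨hp.1.le, hp.2⟩, VaR, if_neg hp.1.ne']
      exact sInf_le ⟨x, hx, rfl⟩
    have hlt : ∀ p ∈ Ioc (0:ℝ) 1, ∀ x : ℝ, g p < x → ENNReal.ofReal p ≤ μ {ω | Z ω ≤ x} := by
      intro p hp x hx
      rw [← hgZ p ⟨hp.1.le, hp.2⟩, VaR, if_neg hp.1.ne'] at hx
      obtain ⟨_, ⟨y, hy, rfl⟩, hyx⟩ := sInf_lt_iff.1 hx
      have hyx' : y < x := EReal.coe_lt_coe_iff.1 hyx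
      have hy : ENNReal.ofReal p ≤ μ {ω | Z ω ≤ y} := hy
      exact hy.trans (measure_mono fun ω (hω : Z ω ≤ y) => hω.trans hyx'.le)
    have hfin : ∀ p ∈ Ioo (0:ℝ) 1, g p ≠ ⊤ := by
      intro p hp
      have hmonoS : Monotone (fun n : ℕ => {ω | Z ω ≤ n}) := by
        intro i j hij ω (hω : Z ω ≤ i)
        exact hω.trans (Nat.cast_le.2 hij)
      have hun : ⋃ n : ℕ, {ω | Z ω ≤ n} = univ := by
        refine eq_univ_of_forall fun ω => ?_
        obtain ⟨n, hn⟩ := exists_nat_ge (Z ω)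
        exact mem_iUnion.2 ⟨n, hn⟩
      have h1 := hmonoS.directed_le.measure_iUnion (μ := μ)
      rw [hun, measure_univ] at h1
      have h2 : ENNReal.ofReal p < ⨆ n : ℕ, μ {ω | Z ω ≤ n} := by
        rw [← h1]; simpa using hp.2
      obtain ⟨n, hn⟩ := lt_iSup_iff.1 h2
      exact ne_top_of_le_ne_top (EReal.coe_ne_top _) (hle p ⟨hp.1, hp.2.le⟩ n hn.le)
    refine ⟨hg, ?_, ?_, ?_⟩
    · intro p hp
      rcases hp.1.eq_or_lt with h0 | h0
      · exact ne_top_of_le_ne_top (hfin (1/2) (by norm_num))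
          (hmono ⟨hp.1, hp.2.le⟩ (by norm_num) (by rw [← h0]; norm_num))
      · exact hfin p ⟨h0, hp.2⟩
    · intro p hp
      rw [tendsto_order]
      constructor
      · intro a ha
        obtain ⟨y, hay, hyp⟩ := EReal.lt_iff_exists_real_btwn.1 ha
        have : ∃ q ∈ Ioo (0:ℝ) p, a < g q := by
          by_contra! hc
          refine absurd hyp (not_lt.2 (hle p hp y ?_))
          apply le_of_forall_lt
          intro c hcp
          have hc' : c ≠ ⊤ := ne_top_of_lt hcp
          obtain ⟨q, h1, h2⟩ := exists_between ((ENNReal.lt_ofReal_iff_toReal_lt hc').1 hcp)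
          have hq0 : 0 < q := ENNReal.toReal_nonneg.trans_lt h1
          exact ((ENNReal.lt_ofReal_iff_toReal_lt hc').2 h1).trans_le
            (hlt q ⟨hq0, h2.le.trans hp.2⟩ y ((hc q ⟨hq0, h2⟩).trans_lt hay))
        obtain ⟨q, hq, haq⟩ := this
        filter_upwards [self_mem_nhdsWithin, mem_nhdsWithin_of_mem_nhds (Ioi_mem_nhds hq.2)]
          with s hs hqs
        exact haq.trans_le (hmono ⟨hq.1.le, hq.2.le.trans hp.2⟩ ⟨hs.1, hs.2.le.trans hp.2⟩
          (le_of_lt hqs))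
      · intro a ha
        filter_upwards [self_mem_nhdsWithin] with s hs
        exact (hmono ⟨hs.1, hs.2.le.trans hp.2⟩ ⟨hp.1.le, hp.2⟩ hs.2.le).trans_lt ha
    · rw [tendsto_order]
      constructor
      · intro a ha
        filter_upwards [self_mem_nhdsWithin] with s hs
        exact ha.trans_le (hmono ⟨le_rfl, zero_le_one⟩ ⟨hs.1.le, hs.2⟩ hs.1.le)
      · intro b hb
        obtain ⟨y, h0y, hyb⟩ := EReal.lt_iff_exists_real_btwn.1 hb
        have hpos : μ {ω | Z ω ≤ y} ≠ 0 := by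
          intro hz
          refine absurd h0y (not_lt.2 ?_)
          rw [← hgZ 0 ⟨le_rfl, zero_le_one⟩, VaR, if_pos rfl]
          refine le_essInf_of_ae_le _ ?_
          have : ∀ᵐ ω ∂μ, ¬ (Z ω ≤ y) := measure_eq_zero_iff_ae_notMem.1 hz
          filter_upwards [this] with ω hω
          exact EReal.coe_le_coe_iff.2 (not_le.1 hω).le
        have hpos' : 0 < (μ {ω | Z ω ≤ y}).toReal :=
          ENNReal.toReal_pos hpos (measure_ne_top _ _)
        filter_upwards [self_mem_nhdsWithin, mem_nhdsWithin_of_mem_nhds (Iio_mem_nhds hpos')]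
          with s hs hsy
        refine (hle s hs y ?_).trans_lt hyb
        exact (ENNReal.ofReal_le_iff_le_toReal (measure_ne_top _ _)).2 (le_of_lt hsy)
end
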